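/- arXiv:1905.06101 — 12 statements merged into one kernel-verified Lean document; each statement's English description precedes it below -/
import Mathlib

section
/- Let d ≥ 1, let h be a d×d complex Hermitian matrix with eigenvalues h_1 ≥ … ≥ h_d, and let p_1 ≥ … ≥ p_d ≥ 0 be real numbers. Then for every orthonormal basis (ξ_1, …, ξ_d) of ℂ^d one has 2 ∑_{i=1}^d ∑_{j=1}^d p_{i,j} |⟨ξ_i, h ξ_j⟩|² ≤ (1/2) ∑_{k=1}^d p_{k,d-k+1} (h_k − h_{d-k+1})². (Upper-bound part of Theorem 1: the quantum Fisher information over all unitary state preparations is bounded by the stated expression.) -/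
open Matrix in
lemma trace_rearr {d : ℕ} (Q : Matrix (Fin d) (Fin d) ℂ) (hQ1 : Q * Qᴴ = 1) (hQ2 : Qᴴ * Q = 1)
    (a : Fin d → ℝ) (ha : Antitone a) (μ : Fin d → ℝ) (σ : Equiv.Perm (Fin d))
    (hσ : Antitone (μ ∘ σ)) :
    ∑ i, ∑ j, a i * μ j * ‖Q i j‖ ^ 2 ≤ ∑ i, a i * μ (σ i) := by
  have hM : (Matrix.of fun i j => ‖Q i j‖ ^ 2) ∈ doublyStochastic ℝ (Fin d) := by
    rw [mem_doublyStochastic_iff_sum]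
    refine ⟨fun i j => by simp only [Matrix.of_apply]; positivity, fun i => ?_, fun j => ?_⟩
    · have := congrFun (congrFun hQ1 i) i
      simp only [Matrix.mul_apply, Matrix.conjTranspose_apply, Matrix.one_apply_eq,
        RCLike.star_def, Complex.mul_conj'] at this
      simp only [Matrix.of_apply]
      exact_mod_cast this
    · have := congrFun (congrFun hQ2 j) j
      simp only [Matrix.mul_apply, Matrix.conjTranspose_apply, Matrix.one_apply_eq,
        RCLike.star_def, Complex.conj_mul'] at this
      simp only [Matrix.of_apply]
      exact_mod_cast this
  obtain ⟨w, hw0, hw1, hw⟩ := exists_eq_sum_perm_of_mem_doublyStochastic hM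
  have hent : ∀ i j, ‖Q i j‖ ^ 2 = ∑ τ : Equiv.Perm (Fin d), w τ * (if τ i = j then 1 else 0) := by
    intro i j
    have := congrFun (congrFun hw i) j
    simp only [Matrix.sum_apply, Matrix.smul_apply, Equiv.Perm.permMatrix, Matrix.of_apply,
      smul_eq_mul, Equiv.toPEquiv_apply, PEquiv.toMatrix_apply] at this
    rw [← this]
    refine Finset.sum_congr rfl fun τ _ => ?_
    simp [eq_comm]
  have hmv : Monovary a (μ ∘ σ) := by
    intro i j hij
    refine ha ?_
    by_contra hlt
    exact absurd (hσ (le_of_not_ge hlt)) (not_le.mpr hij)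
  calc ∑ i, ∑ j, a i * μ j * ‖Q i j‖ ^ 2
      = ∑ τ : Equiv.Perm (Fin d), w τ * ∑ i, a i * μ (τ i) := by
        simp_rw [hent, Finset.mul_sum]
        have : ∀ i : Fin d, ∑ j, ∑ τ : Equiv.Perm (Fin d), a i * μ j * (w τ * (if τ i = j then 1 else 0))
            = ∑ τ : Equiv.Perm (Fin d), w τ * (a i * μ (τ i)) := by
          intro i
          rw [Finset.sum_comm]
          refine Finset.sum_congr rfl fun τ _ => ?_
          simp
          ring
        simp_rw [this]
        rw [Finset.sum_comm]
    _ ≤ ∑ τ : Equiv.Perm (Fin d), w τ * ∑ i, a i * μ (σ i) := by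
        refine Finset.sum_le_sum fun τ _ => mul_le_mul_of_nonneg_left ?_ (hw0 τ)
        have := hmv.sum_mul_comp_perm_le_sum_mul (σ := τ.trans σ.symm)
        simpa using this
    _ = _ := by rw [← Finset.sum_mul, hw1, one_mul]

lemma sorted_symm {d : ℕ} (μ : Fin d → ℝ)
    (hm : Multiset.map μ Finset.univ.val = Multiset.map (fun i => - μ i) Finset.univ.val)
    (σ : Equiv.Perm (Fin d)) (hσ : Antitone (μ ∘ σ)) (i : Fin d) :
    μ (σ i.rev) = - μ (σ i) := by
  have h1 : Antitone (fun i : Fin d => - μ (σ i.rev)) := by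
    intro i j hij
    have := hσ (Fin.rev_le_rev.mpr hij)
    simpa using this
  have hp : (List.ofFn (μ ∘ σ)).Perm (List.ofFn (fun i : Fin d => - μ (σ i.rev))) := by
    have e1 : (List.ofFn (μ ∘ σ)).Perm (List.ofFn μ) := σ.ofFn_comp_perm μ
    have e2 : (List.ofFn (fun i : Fin d => - μ (σ i.rev))).Perm (List.ofFn (fun i => - μ i)) :=
      Equiv.Perm.ofFn_comp_perm (Fin.revPerm.trans σ) (fun i => - μ i)
    have e3 : (List.ofFn μ).Perm (List.ofFn (fun i => - μ i)) := by
      rw [Fin.univ_val_map, Fin.univ_val_map] at hm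
      exact Multiset.coe_eq_coe.mp hm
    exact e1.trans (e3.trans e2.symm)
  have := hp.eq_of_pairwise' (hσ.sortedGE_ofFn.pairwise) (h1.sortedGE_ofFn.pairwise)
  have := congrFun (List.ofFn_injective this) i
  simp only [Function.comp] at this
  linarith

lemma sorted_support {d : ℕ} (κ : Fin d → ℝ) (hκ : Antitone κ) (hs : ∀ i, κ i.rev = - κ i)
    (r : ℕ) (hr : (Finset.univ.filter fun i => κ i ≠ 0).card ≤ 2 * r) (i : Fin d) (hi : κ i ≠ 0) :
    i.val < r ∨ i.rev.val < r := by
  have key : ∀ i : Fin d, 0 < κ i → i.val < r := by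
    intro i hi
    by_contra hlt
    push Not at hlt
    have hd : Disjoint (Finset.Iic i) (Finset.Ici i.rev) := by
      rw [Finset.disjoint_left]
      intro x hx hx'
      rw [Finset.mem_Iic] at hx
      rw [Finset.mem_Ici] at hx'
      have a1 := hκ hx
      have a2 := hκ hx'
      rw [hs] at a2
      linarith
    have hsub : Finset.Iic i ∪ Finset.Ici i.rev ⊆ Finset.univ.filter fun i => κ i ≠ 0 := by
      intro x hx
      simp only [Finset.mem_union, Finset.mem_Iic, Finset.mem_Ici] at hx
      simp only [Finset.mem_filter, Finset.mem_univ, true_and]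
      rcases hx with hx | hx
      · have := hκ hx
        exact ne_of_gt (by linarith)
      · have := hκ hx
        rw [hs] at this
        exact ne_of_lt (by linarith)
    have := Finset.card_le_card hsub
    rw [Finset.card_union_of_disjoint hd, Fin.card_Iic, Fin.card_Ici, Fin.val_rev] at this
    omega
  rcases lt_or_gt_of_ne hi with h | h
  · right
    apply key
    rw [hs]; linarith
  · left; exact key i h

open Matrix in
lemma mask_rank {d : ℕ} (A : Matrix (Fin d) (Fin d) ℂ) (S : Finset (Fin d))
    (hA : ∀ i j, i ∉ S → A i j = 0) : A.rank ≤ S.card := by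
  have : A = Matrix.diagonal (fun i => if i ∈ S then (1:ℂ) else 0) * A := by
    ext i j
    rw [Matrix.diagonal_mul]
    by_cases h : i ∈ S
    · simp [h]
    · simp [h, hA i j h]
  rw [this]
  refine (Matrix.rank_mul_le_left _ _).trans ?_
  rw [Matrix.rank_diagonal, Fintype.card_subtype]
  refine Finset.card_le_card ?_
  intro i hi
  simpa using hi

lemma my_rank_add {d : ℕ} (A B : Matrix (Fin d) (Fin d) ℂ) : (A + B).rank ≤ A.rank + B.rank := by
  have h0 : LinearMap.range (A + B).mulVecLin
      ≤ LinearMap.range A.mulVecLin ⊔ LinearMap.range B.mulVecLin := by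
    rintro _ ⟨v, rfl⟩
    rw [Matrix.mulVecLin_apply, Matrix.add_mulVec]
    exact Submodule.add_mem_sup ⟨v, rfl⟩ ⟨v, rfl⟩
  exact (Submodule.finrank_mono h0).trans (Submodule.finrank_add_le_finrank_add_finrank _ _)

set_option maxHeartbeats 1000000 in
open Matrix ComplexOrder in
lemma bloomfield_watson {d : ℕ} (V H : Matrix (Fin d) (Fin d) ℂ) (hV1 : V * Vᴴ = 1)
    (hV2 : Vᴴ * V = 1) (a : Fin d → ℝ) (ha : Antitone a)
    (hH : H = V * Matrix.diagonal (fun k => (a k : ℂ)) * Vᴴ)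
    (S T : Finset (Fin d)) (hST : Disjoint S T) (r : ℕ) (hr : S.card ≤ r ∨ T.card ≤ r) :
    8 * ∑ i ∈ S, ∑ j ∈ T, ‖H i j‖ ^ 2
      ≤ ∑ i : Fin d, if i.val < r ∨ i.rev.val < r then (a i - a i.rev) ^ 2 else 0 := by
  have hHh : Hᴴ = H := by
    rw [hH]
    simp only [Matrix.conjTranspose_mul, Matrix.conjTranspose_conjTranspose,
      Matrix.diagonal_conjTranspose, Matrix.mul_assoc]
    congr 3
    ext k
    simp
  have hHs : ∀ i j, star (H i j) = H j i := fun i j => by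
    have := congrFun (congrFun hHh j) i
    simpa using this
  set A : Matrix (Fin d) (Fin d) ℂ := Matrix.of fun i j => if i ∈ S ∧ j ∈ T then H i j else 0 with hA
  have hrA : A.rank ≤ r := by
    rcases hr with hr | hr
    · refine (mask_rank A S ?_).trans hr
      intro i j hi
      simp [A, hi]
    · rw [← Matrix.rank_conjTranspose]
      refine (mask_rank Aᴴ T ?_).trans hr
      intro i j hi
      simp [A, hi]
  set K := A + Aᴴ with hKdef
  have hK : K.IsHermitian := by
    rw [Matrix.IsHermitian, hKdef, Matrix.conjTranspose_add, Matrix.conjTranspose_conjTranspose, add_comm]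
  have hrK : K.rank ≤ 2 * r := by
    have h1 := my_rank_add A Aᴴ
    rw [← hKdef, Matrix.rank_conjTranspose] at h1
    omega
  have hKe : ∀ i j, K i j = if (i ∈ S ∧ j ∈ T) ∨ (j ∈ S ∧ i ∈ T) then H i j else 0 := by
    intro i j
    have hd := Finset.disjoint_left.mp hST
    simp only [hKdef, A, Matrix.add_apply, Matrix.of_apply, Matrix.conjTranspose_apply]
    have e := hHs j i
    by_cases h1 : i ∈ S ∧ j ∈ T
    · have h2 : ¬ (j ∈ S ∧ i ∈ T) := fun h => hd h1.1 h.2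
      simp [h1, h2]
    · by_cases h2 : j ∈ S ∧ i ∈ T
      · simp only [h1, h2, if_false, if_true, false_or, zero_add, and_self, e]
      · simp [h1, h2]
  -- spectral data
  set μ := hK.eigenvalues with hμ
  set W : Matrix (Fin d) (Fin d) ℂ := hK.eigenvectorUnitary.1 with hW
  have hW1 : W * Wᴴ = 1 := Unitary.mul_star_self_of_mem hK.eigenvectorUnitary.2
  have hW2 : Wᴴ * W = 1 := Unitary.star_mul_self_of_mem hK.eigenvectorUnitary.2
  have hKW : K = W * Matrix.diagonal (fun k => (μ k : ℂ)) * Wᴴ := by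
    have := hK.spectral_theorem
    rw [Unitary.conjStarAlgAut_apply] at this
    exact this
  set σ := Tuple.sort (fun i => - μ i) with hσd
  have hσ : Antitone (μ ∘ σ) := by
    have := Tuple.monotone_sort (fun i => - μ i)
    intro i j hij
    have := this hij
    simp only [Function.comp] at this ⊢
    linarith
  -- symmetric spectrum
  have hsym : Multiset.map μ Finset.univ.val = Multiset.map (fun i => - μ i) Finset.univ.val := by
    set U : Matrix (Fin d) (Fin d) ℂ := Matrix.diagonal (fun i => if i ∈ S then (1:ℂ) else -1) with hU
    have hUU : U * U = 1 := by
      rw [hU, Matrix.diagonal_mul_diagonal, ← Matrix.diagonal_one]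
      congr 1
      ext i
      split_ifs <;> simp
    have hUK : -K = U * K * U := by
      ext i j
      rw [hU, Matrix.mul_diagonal, Matrix.diagonal_mul, Matrix.neg_apply, hKe]
      have hd := Finset.disjoint_left.mp hST
      have hdi := @hd i
      have hdj := @hd j
      by_cases h1 : i ∈ S <;> by_cases h2 : j ∈ S <;> simp [h1, h2] <;> grind
    have hc1 : (-K).charpoly = K.charpoly := by
      rw [hUK, Matrix.charpoly_mul_comm, ← Matrix.mul_assoc, hUU, Matrix.one_mul]
    have hc2 : (-K).charpoly = ∏ i, (Polynomial.X - Polynomial.C ((-μ i : ℝ) : ℂ)) := by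
      have : -K = W * Matrix.diagonal (fun k => ((-μ k : ℝ) : ℂ)) * Wᴴ := by
        conv_lhs => rw [hKW]
        rw [← Matrix.neg_mul, ← Matrix.mul_neg, Matrix.diagonal_neg]
        congr 3
        ext k
        simp
      rw [this, Matrix.charpoly_mul_comm, ← Matrix.mul_assoc, hW2, Matrix.one_mul,
        Matrix.charpoly_diagonal]
    have hr1 := hK.roots_charpoly_eq_eigenvalues
    rw [← hc1, hc2] at hr1
    have hr2 : (∏ i, (Polynomial.X - Polynomial.C ((-μ i : ℝ) : ℂ))).roots
        = Multiset.map (fun i => ((-μ i : ℝ) : ℂ)) Finset.univ.val := by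
      have : (∏ i, (Polynomial.X - Polynomial.C ((-μ i : ℝ) : ℂ)))
        = (Multiset.map (fun z => Polynomial.X - Polynomial.C z)
          (Multiset.map (fun i => ((-μ i : ℝ) : ℂ)) Finset.univ.val)).prod := by
        rw [Multiset.map_map]; rfl
      rw [this, Polynomial.roots_multiset_prod_X_sub_C]
    rw [hr2] at hr1
    have := congrArg (Multiset.map Complex.re) hr1
    rw [Multiset.map_map, Multiset.map_map] at this
    simpa [Function.comp_def] using this.symm
  have hκs := sorted_symm μ hsym σ hσ
  have hcard : (Finset.univ.filter fun i => (μ ∘ σ) i ≠ 0).card ≤ 2 * r := by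
    have h1 := hK.rank_eq_card_non_zero_eigs
    rw [Fintype.card_subtype] at h1
    have h2 : (Finset.univ.filter fun i => (μ ∘ σ) i ≠ 0).card
        = (Finset.univ.filter fun i => μ i ≠ 0).card := by
      refine Finset.card_equiv σ ?_
      intro i; simp
    rw [h2, ← h1]; exact hrK
  have hsupp := sorted_support (μ ∘ σ) hσ hκs r hcard
  -- traces
  set N := ∑ i ∈ S, ∑ j ∈ T, ‖H i j‖ ^ 2 with hN
  have hsumN : ∑ i, ∑ j, ‖K i j‖ ^ 2 = 2 * N := by
    have hd := Finset.disjoint_left.mp hST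
    have h1 : ∀ i j, ‖K i j‖ ^ 2 = (if i ∈ S then (if j ∈ T then ‖H i j‖ ^ 2 else 0) else 0)
        + (if j ∈ S then (if i ∈ T then ‖H j i‖ ^ 2 else 0) else 0) := by
      intro i j
      have hdi := @hd i
      have hdj := @hd j
      have : ‖H j i‖ = ‖H i j‖ := by rw [← hHs i j, norm_star]
      rw [hKe, this]
      by_cases h1 : i ∈ S <;> by_cases h2 : j ∈ S <;> by_cases h3 : i ∈ T <;> by_cases h4 : j ∈ T <;>
        first
        | exact absurd h3 (hdi h1)
        | exact absurd h4 (hdj h2)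
        | simp [h1, h2, h3, h4]
    simp_rw [h1, Finset.sum_add_distrib]
    rw [Finset.sum_comm (f := fun i j => (if j ∈ S then (if i ∈ T then ‖H j i‖ ^ 2 else 0) else 0))]
    have : ∑ i, ∑ j, (if i ∈ S then (if j ∈ T then ‖H i j‖ ^ 2 else 0) else 0) = N := by
      have e : ∀ i, ∑ j, (if i ∈ S then (if j ∈ T then ‖H i j‖ ^ 2 else 0) else 0)
          = if i ∈ S then ∑ j ∈ T, ‖H i j‖ ^ 2 else 0 := by
        intro i
        by_cases hi : i ∈ S
        · simp [hi]
        · simp [hi]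
      simp_rw [e]
      simp [hN]
    rw [this]; ring
  have htrK : (K * K).trace = ((2 * N : ℝ) : ℂ) := by
    rw [← hsumN, Matrix.trace]
    push_cast
    refine Finset.sum_congr rfl fun i _ => ?_
    rw [Matrix.diag_apply, Matrix.mul_apply]
    refine Finset.sum_congr rfl fun j _ => ?_
    rw [← Complex.mul_conj']
    congr 1
    have := congrFun (congrFun hK j) i
    simpa using this.symm
  have htrHK : (H * K).trace = ((2 * N : ℝ) : ℂ) := by
    rw [← htrK, Matrix.trace, Matrix.trace]
    refine Finset.sum_congr rfl fun i _ => ?_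
    rw [Matrix.diag_apply, Matrix.mul_apply, Matrix.diag_apply, Matrix.mul_apply]
    refine Finset.sum_congr rfl fun j _ => ?_
    rw [hKe i j, hKe j i]
    by_cases h1 : (i ∈ S ∧ j ∈ T) ∨ (j ∈ S ∧ i ∈ T)
    · simp [h1]
    · have h2 : ¬ ((j ∈ S ∧ i ∈ T) ∨ (i ∈ S ∧ j ∈ T)) := fun h => h1 h.symm
      simp only [h1, h2, if_false, mul_zero]
  have hsq : ∑ i, μ (σ i) ^ 2 = 2 * N := by
    rw [Equiv.sum_comp σ (fun i => μ i ^ 2)]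
    have : (K * K).trace = ((∑ i, μ i ^ 2 : ℝ) : ℂ) := by
      have : K * K = W * (Matrix.diagonal (fun k => (μ k : ℂ)) * Matrix.diagonal (fun k => (μ k : ℂ))) * Wᴴ := by
        conv_lhs => rw [hKW]
        calc _ = W * Matrix.diagonal (fun k => (μ k : ℂ)) * (Wᴴ * W) * Matrix.diagonal (fun k => (μ k : ℂ)) * Wᴴ := by
              simp only [Matrix.mul_assoc]
          _ = _ := by rw [hW2]; simp only [Matrix.mul_assoc, Matrix.one_mul]
      rw [this, Matrix.trace_mul_comm, ← Matrix.mul_assoc, hW2, Matrix.one_mul,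
        Matrix.diagonal_mul_diagonal, Matrix.trace_diagonal]
      push_cast
      simp only [sq]
    rw [htrK] at this
    exact_mod_cast this.symm
  have hle : 2 * N ≤ ∑ i, a i * μ (σ i) := by
    set Q := Vᴴ * W with hQ
    have hQ1 : Q * Qᴴ = 1 := by
      rw [hQ, Matrix.conjTranspose_mul, Matrix.conjTranspose_conjTranspose]
      calc _ = Vᴴ * (W * Wᴴ) * V := by simp only [Matrix.mul_assoc]
        _ = 1 := by rw [hW1, Matrix.mul_one, hV2]
    have hQ2 : Qᴴ * Q = 1 := by
      rw [hQ, Matrix.conjTranspose_mul, Matrix.conjTranspose_conjTranspose]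
      calc _ = Wᴴ * (V * Vᴴ) * W := by simp only [Matrix.mul_assoc]
        _ = 1 := by rw [hV1, Matrix.mul_one, hW2]
    have h1 := trace_rearr Q hQ1 hQ2 a ha μ σ hσ
    refine le_trans (le_of_eq ?_) h1
    have h2 : (H * K).trace = ((∑ i, ∑ j, a i * μ j * ‖Q i j‖ ^ 2 : ℝ) : ℂ) := by
      have : (H * K).trace = (Matrix.diagonal (fun k => (a k : ℂ)) * Q *
          (Matrix.diagonal (fun k => (μ k : ℂ)) * Qᴴ)).trace := by
        conv_lhs => rw [hKW, hH]
        rw [hQ, Matrix.conjTranspose_mul, Matrix.conjTranspose_conjTranspose]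
        simp only [Matrix.mul_assoc]
        rw [Matrix.trace_mul_comm]
        simp only [Matrix.mul_assoc]
      rw [this, Matrix.trace]
      push_cast
      refine Finset.sum_congr rfl fun i _ => ?_
      rw [Matrix.diag_apply, Matrix.mul_apply]
      refine Finset.sum_congr rfl fun j _ => ?_
      rw [Matrix.diagonal_mul, Matrix.diagonal_mul, Matrix.conjTranspose_apply, ← Complex.mul_conj']
      simp only [RCLike.star_def]
      ring
    rw [htrHK] at h2
    exact_mod_cast h2
  have hhalf : 2 * ∑ i, a i * μ (σ i) = ∑ i, μ (σ i) * (a i - a i.rev) := by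
    have h1 : ∑ i : Fin d, μ (σ i) * a i.rev = - ∑ i, a i * μ (σ i) := by
      rw [← Equiv.sum_comp Fin.revPerm, ← Finset.sum_neg_distrib]
      refine Finset.sum_congr rfl fun i _ => ?_
      simp only [Fin.revPerm_apply, Fin.rev_rev, hκs]
      ring
    simp_rw [mul_sub, Finset.sum_sub_distrib, h1]
    have : ∑ i, μ (σ i) * a i = ∑ i, a i * μ (σ i) := Finset.sum_congr rfl fun i _ => mul_comm _ _
    rw [this]; ring
  have hfin : ∑ i, μ (σ i) * (a i - a i.rev) ≤ ∑ i, (μ (σ i) ^ 2 +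
      (1/4) * if i.val < r ∨ i.rev.val < r then (a i - a i.rev) ^ 2 else 0) := by
    refine Finset.sum_le_sum fun i _ => ?_
    by_cases h0 : μ (σ i) = 0
    · rw [h0]
      have : (0:ℝ) ≤ if i.val < r ∨ i.rev.val < r then (a i - a i.rev) ^ 2 else 0 := by
        split_ifs <;> positivity
      nlinarith
    · rw [if_pos (hsupp i h0)]
      nlinarith [sq_nonneg (μ (σ i) - (a i - a i.rev) / 2)]
  rw [Finset.sum_add_distrib, hsq, ← Finset.mul_sum] at hfin
  linarith

noncomputable def FF (x y : ℝ) : ℝ := (x - y) ^ 2 / (x + y)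

lemma FF_eq {x y : ℝ} (hx : 0 ≤ x) (hy : 0 ≤ y) : FF x y = x + y - 4 * (x * y / (x + y)) := by
  unfold FF
  rcases eq_or_lt_of_le (add_nonneg hx hy) with h | h
  · rw [← h]; simp
  · field_simp; ring

lemma FF_nonneg {x y : ℝ} (hx : 0 ≤ x) (hy : 0 ≤ y) : 0 ≤ FF x y := by
  unfold FF; positivity

lemma FF_super {x1 x2 y1 y2 : ℝ} (hx : x2 ≤ x1) (hx2 : 0 ≤ x2) (hy : y2 ≤ y1) (hy2 : 0 ≤ y2) :
    0 ≤ FF x1 y2 - FF x2 y2 - FF x1 y1 + FF x2 y1 := by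
  have hx1 := hx2.trans hx
  have hy1 := hy2.trans hy
  rw [FF_eq hx1 hy2, FF_eq hx2 hy2, FF_eq hx1 hy1, FF_eq hx2 hy1]
  have key : ∀ x : ℝ, 0 < x → x * y1 / (x + y1) - x * y2 / (x + y2)
      = (y1 - y2) * ((x / (x + y1)) * (x / (x + y2))) := by
    intro x h
    have : x + y1 ≠ 0 := by positivity
    have : x + y2 ≠ 0 := by positivity
    field_simp
    ring
  have mono : ∀ y : ℝ, 0 ≤ y → 0 < x2 → x2 / (x2 + y) ≤ x1 / (x1 + y) := by
    intro y h h0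
    rw [div_le_div_iff₀ (by linarith) (by linarith)]
    nlinarith
  rcases eq_or_lt_of_le hx1 with h1 | h1
  · have : x2 = 0 := by linarith
    subst this; rw [← h1]; simp
  have k1 := key x1 h1
  rcases eq_or_lt_of_le hx2 with h | h
  · rw [← h]
    have : 0 ≤ (y1 - y2) * ((x1 / (x1 + y1)) * (x1 / (x1 + y2))) :=
      mul_nonneg (by linarith) (by positivity)
    simp only [zero_mul, zero_div]
    linarith
  · have k2 := key x2 h
    have : (y1 - y2) * ((x2 / (x2 + y1)) * (x2 / (x2 + y2)))
      ≤ (y1 - y2) * ((x1 / (x1 + y1)) * (x1 / (x1 + y2))) := by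
      refine mul_le_mul_of_nonneg_left ?_ (by linarith)
      exact mul_le_mul (mono y1 hy1 h) (mono y2 hy2 h) (by positivity) (by positivity)
    linarith

lemma decomp {d : ℕ} (q : ℕ → ℝ) (hq : Antitone q) (hq0 : ∀ n, 0 ≤ q n) :
    ∃ c : ℕ → ℕ → ℝ, (∀ k n, 0 ≤ c k n) ∧ (∀ k n, n < k → c k n = 0) ∧
      ∀ i j : ℕ, i < d → j < d → FF (q i) (q j) =
        ∑ k ∈ Finset.range d, ∑ n ∈ Finset.range d, c k n *
          ((if i ≤ k ∧ n < j then 1 else 0) + (if j ≤ k ∧ n < i then 1 else 0)) := by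
  set g : ℕ → ℕ → ℝ := fun k l => if k < l then FF (q k) (q l) else 0 with hg
  have hself : ∀ x, FF x x = 0 := fun x => by simp [FF]
  have hcomm : ∀ x y, FF x y = FF y x := fun x y => by
    unfold FF; rw [add_comm]; congr 1; ring
  have hone : ∀ i j : ℕ, i < d → j < d → g i j =
      ∑ k ∈ Finset.range d, ∑ n ∈ Finset.range d,
        (g k (n+1) - g (k+1) (n+1) - g k n + g (k+1) n) * (if i ≤ k ∧ n < j then 1 else 0) := by
    intro i j hi hj
    have h1 : ∀ k, ∑ n ∈ Finset.range d,
        (g k (n+1) - g (k+1) (n+1) - g k n + g (k+1) n) * (if i ≤ k ∧ n < j then 1 else 0)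
        = if i ≤ k then g k j - g (k+1) j else 0 := by
      intro k
      by_cases hik : i ≤ k
      · simp only [hik, true_and, if_true, mul_ite, mul_one, mul_zero]
        rw [← Finset.sum_filter]
        have : (Finset.range d).filter (fun n => n < j) = Finset.range j := by
          ext n; simp; omega
        rw [this]
        have h2 := Finset.sum_range_sub (fun n => g k n - g (k+1) n) j
        have h3 : g k 0 = 0 := by simp [hg]
        have h4 : g (k+1) 0 = 0 := by simp [hg]
        rw [h3, h4] at h2
        rw [sub_zero, sub_zero] at h2
        rw [← h2]
        refine Finset.sum_congr rfl fun n _ => by ring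
      · simp [hik]
    simp_rw [h1]
    rw [← Finset.sum_filter]
    have : (Finset.range d).filter (fun n => i ≤ n) = Finset.Ico i d := by
      ext n; simp; omega
    rw [this]
    have h2 := Finset.sum_Ico_sub (fun k => g k j) hi.le
    have h3 : g d j = 0 := by simp [hg]; omega
    rw [h3] at h2
    have h4 : ∑ k ∈ Finset.Ico i d, (g k j - g (k+1) j) = - ∑ k ∈ Finset.Ico i d, (g (k+1) j - g k j) := by
      rw [← Finset.sum_neg_distrib]
      refine Finset.sum_congr rfl fun n _ => by ring
    rw [h4, h2]; ring
  refine ⟨fun k n => g k (n+1) - g (k+1) (n+1) - g k n + g (k+1) n, ?_, ?_, ?_⟩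
  · intro k n
    simp only [hg]
    rcases lt_trichotomy k n with h | h | h
    · have e : (if k + 1 < n then FF (q (k+1)) (q n) else 0) = FF (q (k+1)) (q n) := by
        split_ifs with h'
        · rfl
        · have : k + 1 = n := by omega
          rw [this, hself]
      rw [e, if_pos (by omega), if_pos (by omega), if_pos h]
      exact FF_super (hq (by omega)) (hq0 _) (hq (by omega)) (hq0 _)
    · subst h
      simp
      exact FF_nonneg (hq0 _) (hq0 _)
    · rw [if_neg (by omega), if_neg (by omega), if_neg (by omega), if_neg (by omega)]; simp
  · intro k n h
    simp only [hg]
    rw [if_neg (by omega), if_neg (by omega), if_neg (by omega), if_neg (by omega)]; simp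
  · intro i j hi hj
    simp_rw [mul_add, Finset.sum_add_distrib]
    rw [← hone i j hi hj, ← hone j i hj hi]
    simp only [hg]
    rcases lt_trichotomy i j with h | h | h
    · rw [if_pos h, if_neg (by omega), add_zero]
    · subst h; simp [hself]
    · rw [if_neg (by omega), if_pos h, zero_add, hcomm]

/-- The coefficients `p_{i,j}`: `0` if `p i = p j = 0`, else `(p i - p j)² / (p i + p j)`. -/
noncomputable def pij {d : ℕ} (p : Fin d → ℝ) (i j : Fin d) : ℝ :=
  if p i = 0 ∧ p j = 0 then 0 else (p i - p j) ^ 2 / (p i + p j)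

/-- Upper-bound part of Theorem 1: for any Hermitian generator `h` with decreasingly
ordered eigenvalues `a` (with orthonormal eigenbasis `e`), any decreasing nonnegative
eigenvalues `p` of the state, and any orthonormal basis `ξ`, the quantum Fisher
information `2 ∑ᵢⱼ p_{i,j} |⟨ξᵢ, h ξⱼ⟩|²` is at most
`(1/2) ∑ₖ p_{k,d-k+1} (h_k - h_{d-k+1})²`. -/
theorem maxQFI_upper_bound {d : ℕ} (hd : 1 ≤ d)
    (h : Matrix (Fin d) (Fin d) ℂ) (hh : h.IsHermitian)
    (a : Fin d → ℝ) (ha : Antitone a)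
    (e : Fin d → EuclideanSpace ℂ (Fin d)) (he : Orthonormal ℂ e)
    (heig : ∀ k, Matrix.toEuclideanLin h (e k) = (a k : ℂ) • e k)
    (p : Fin d → ℝ) (hp : Antitone p) (hp0 : ∀ i, 0 ≤ p i)
    (ξ : Fin d → EuclideanSpace ℂ (Fin d)) (hξ : Orthonormal ℂ ξ) :
    2 * ∑ i, ∑ j, pij p i j *
        ‖(inner ℂ (ξ i) (Matrix.toEuclideanLin h (ξ j)) : ℂ)‖ ^ 2
      ≤ (1 / 2) * ∑ k, pij p k k.rev * (a k - a k.rev) ^ 2 := by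
  classical
  set H : Matrix (Fin d) (Fin d) ℂ :=
    Matrix.of fun i j => (inner ℂ (ξ i) (Matrix.toEuclideanLin h (ξ j)) : ℂ) with hHdef
  set V : Matrix (Fin d) (Fin d) ℂ := Matrix.of fun i k => (inner ℂ (ξ i) (e k) : ℂ) with hVdef
  have hcardE : Fintype.card (Fin d) = Module.finrank ℂ (EuclideanSpace ℂ (Fin d)) := by simp
  have : Nonempty (Fin d) := ⟨⟨0, hd⟩⟩
  let be : OrthonormalBasis (Fin d) ℂ (EuclideanSpace ℂ (Fin d)) :=
    (basisOfOrthonormalOfCardEqFinrank he hcardE).toOrthonormalBasis (by simpa using he)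
  let bξ : OrthonormalBasis (Fin d) ℂ (EuclideanSpace ℂ (Fin d)) :=
    (basisOfOrthonormalOfCardEqFinrank hξ hcardE).toOrthonormalBasis (by simpa using hξ)
  have hbe : ∀ k, be k = e k := fun k => by simp [be]
  have hbξ : ∀ k, bξ k = ξ k := fun k => by simp [bξ]
  have hV1 : V * V.conjTranspose = 1 := by
    ext i j
    rw [Matrix.mul_apply]
    simp only [hVdef, Matrix.of_apply, Matrix.conjTranspose_apply, RCLike.star_def, inner_conj_symm]
    have := be.sum_inner_mul_inner (ξ i) (ξ j)
    simp only [hbe] at this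
    rw [this, orthonormal_iff_ite.mp hξ, Matrix.one_apply]
  have hV2 : V.conjTranspose * V = 1 := mul_eq_one_comm.mp hV1
  have hH : H = V * Matrix.diagonal (fun k => (a k : ℂ)) * V.conjTranspose := by
    ext i j
    rw [Matrix.mul_apply]
    simp only [Matrix.mul_diagonal]
    simp only [hVdef, hHdef, Matrix.of_apply, Matrix.conjTranspose_apply, RCLike.star_def, inner_conj_symm]
    have h1 : ξ j = ∑ k, (inner ℂ (e k) (ξ j) : ℂ) • e k := by
      have := be.sum_repr' (ξ j)
      simp only [hbe] at this
      exact this.symm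
    conv_lhs => rw [h1]
    rw [map_sum, inner_sum]
    refine Finset.sum_congr rfl fun k _ => ?_
    rw [map_smul, heig, inner_smul_right, inner_smul_right]
    ring
  let q : ℕ → ℝ := fun n => p ⟨min n (d - 1), by omega⟩
  have hq : Antitone q := fun m n hmn => hp (by
    rw [Fin.mk_le_mk]; exact min_le_min hmn le_rfl)
  have hqp : ∀ i : Fin d, q i.val = p i := fun i => by
    simp only [q]; congr 1; ext; simp; omega
  obtain ⟨c, hc0, hcz, hc⟩ := decomp (d := d) q hq (fun n => hp0 _)
  have hpij : ∀ i j : Fin d, pij p i j = ∑ k ∈ Finset.range d, ∑ n ∈ Finset.range d, c k n *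
          ((if i.val ≤ k ∧ n < j.val then 1 else 0) + (if j.val ≤ k ∧ n < i.val then 1 else 0)) := by
    intro i j
    rw [← hc i j i.2 j.2, hqp, hqp, pij, FF]
    split_ifs with h0
    · rw [h0.1, h0.2]; simp
    · rfl
  have hsw : ∀ (G : Fin d → Fin d → ℝ), ∑ i, ∑ j, pij p i j * G i j
      = ∑ k ∈ Finset.range d, ∑ n ∈ Finset.range d, c k n * ∑ i : Fin d, ∑ j : Fin d,
        ((if i.val ≤ k ∧ n < j.val then 1 else 0) + (if j.val ≤ k ∧ n < i.val then 1 else 0)) * G i j := by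
    intro G
    simp_rw [hpij, Finset.sum_mul, Finset.mul_sum]
    have : ∀ i : Fin d, ∑ j : Fin d, ∑ k ∈ Finset.range d, ∑ n ∈ Finset.range d, c k n *
          ((if i.val ≤ k ∧ n < j.val then 1 else 0) + (if j.val ≤ k ∧ n < i.val then 1 else 0)) * G i j
        = ∑ k ∈ Finset.range d, ∑ n ∈ Finset.range d, ∑ j : Fin d, c k n *
          (((if i.val ≤ k ∧ n < j.val then 1 else 0) + (if j.val ≤ k ∧ n < i.val then 1 else 0)) * G i j) := by
      intro i
      rw [Finset.sum_comm]
      refine Finset.sum_congr rfl fun k _ => ?_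
      rw [Finset.sum_comm]
      simp only [mul_assoc]
    simp_rw [this]
    rw [Finset.sum_comm]
    refine Finset.sum_congr rfl fun k _ => ?_
    rw [Finset.sum_comm]
  have hR : ∑ k, pij p k k.rev * (a k - a k.rev) ^ 2
      = ∑ i, ∑ j, pij p i j * (if j = i.rev then (a i - a i.rev) ^ 2 else 0) := by
    refine Finset.sum_congr rfl fun i _ => ?_
    simp
  have hL : ∑ i, ∑ j, pij p i j * ‖(inner ℂ (ξ i) (Matrix.toEuclideanLin h (ξ j)) : ℂ)‖ ^ 2
      = ∑ i, ∑ j, pij p i j * ‖H i j‖ ^ 2 := rfl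
  rw [hL, hR, hsw, hsw, Finset.mul_sum, Finset.mul_sum]
  refine Finset.sum_le_sum fun k hk => ?_
  rw [Finset.mul_sum, Finset.mul_sum]
  refine Finset.sum_le_sum fun n hn => ?_
  by_cases hkn : n < k
  · rw [hcz k n hkn]; simp
  push Not at hkn
  rw [mul_left_comm, mul_left_comm (1/2 : ℝ)]
  refine mul_le_mul_of_nonneg_left ?_ (hc0 k n)
  rw [Finset.mem_range] at hk hn
  let S : Finset (Fin d) := Finset.univ.filter fun i => i.val ≤ k
  let T : Finset (Fin d) := Finset.univ.filter fun i => n < i.val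
  have hST : Disjoint S T := by
    rw [Finset.disjoint_left]
    intro i hi hi'
    simp only [S, T, Finset.mem_filter, Finset.mem_univ, true_and] at hi hi'
    omega
  have hScard : S.card = k + 1 := by
    have : S = Finset.Iic ⟨k, hk⟩ := by ext i; simp [S, Fin.le_def]
    rw [this, Fin.card_Iic]
  have hTcard : T.card = d - (n + 1) := by
    have : T = Finset.Ioi ⟨n, hn⟩ := by ext i; simp [T, Fin.lt_def]
    rw [this, Fin.card_Ioi]
    simp only; omega
  have hbw := bloomfield_watson V H hV1 hV2 a ha hH S T hST (min (k + 1) (d - (n + 1))) (by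
    rw [hScard, hTcard]; omega)
  have hHsym : ∀ i j, ‖H i j‖ = ‖H j i‖ := by
    intro i j
    have hHh : H.conjTranspose = H := by
      rw [hH]
      simp only [Matrix.conjTranspose_mul, Matrix.conjTranspose_conjTranspose,
        Matrix.diagonal_conjTranspose, Matrix.mul_assoc]
      congr 3
      ext k
      simp
    have := congrFun (congrFun hHh i) j
    rw [← this, Matrix.conjTranspose_apply, norm_star]
  have hl : ∑ i : Fin d, ∑ j : Fin d,
        ((if i.val ≤ k ∧ n < j.val then 1 else 0) + (if j.val ≤ k ∧ n < i.val then 1 else 0)) * ‖H i j‖ ^ 2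
      = 2 * ∑ i ∈ S, ∑ j ∈ T, ‖H i j‖ ^ 2 := by
    have h1 : ∑ i : Fin d, ∑ j : Fin d, (if i.val ≤ k ∧ n < j.val then (1:ℝ) else 0) * ‖H i j‖ ^ 2
        = ∑ i ∈ S, ∑ j ∈ T, ‖H i j‖ ^ 2 := by
      simp only [S, T, Finset.sum_filter]
      refine Finset.sum_congr rfl fun i _ => ?_
      by_cases h1 : i.val ≤ k <;> simp [h1]
    simp_rw [add_mul, Finset.sum_add_distrib]
    rw [Finset.sum_comm (f := fun i j : Fin d => (if j.val ≤ k ∧ n < i.val then (1:ℝ) else 0) * ‖H i j‖ ^ 2)]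
    have h2 : ∑ j : Fin d, ∑ i : Fin d, (if j.val ≤ k ∧ n < i.val then (1:ℝ) else 0) * ‖H i j‖ ^ 2
        = ∑ i ∈ S, ∑ j ∈ T, ‖H i j‖ ^ 2 := by
      rw [← h1]
      refine Finset.sum_congr rfl fun j _ => Finset.sum_congr rfl fun i _ => ?_
      rw [hHsym i j]
    rw [h1, h2]; ring
  have hrr : ∑ i : Fin d, ∑ j : Fin d,
        ((if i.val ≤ k ∧ n < j.val then 1 else 0) + (if j.val ≤ k ∧ n < i.val then 1 else 0)) *
          (if j = i.rev then (a i - a i.rev) ^ 2 else 0)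
      = ∑ i : Fin d, if i.val < (min (k + 1) (d - (n + 1))) ∨ i.rev.val < (min (k + 1) (d - (n + 1)))
          then (a i - a i.rev) ^ 2 else 0 := by
    refine Finset.sum_congr rfl fun i _ => ?_
    simp only [mul_ite, mul_zero, Finset.sum_ite_eq', Finset.mem_univ, if_true]
    have hi := i.2
    have hv := Fin.val_rev i
    by_cases h1 : i.val ≤ k ∧ n < i.rev.val
    · rw [if_pos h1, if_neg (by omega), if_pos (by omega)]; ring
    · by_cases h2 : i.rev.val ≤ k ∧ n < i.val
      · rw [if_neg h1, if_pos h2, if_pos (by omega)]; ring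
      · rw [if_neg h1, if_neg h2, if_neg (by omega)]; ring
  rw [hl, hrr]
  linarith
end

section
/- Let d ≥ 1, let h be a d×d complex Hermitian matrix with an orthonormal eigenbasis e_1, …, e_d of ℂ^d, h e_k = h_k e_k, where h_1 ≥ … ≥ h_d, and let p_1 ≥ … ≥ p_d ≥ 0 be real numbers. Define the orthonormal basis φ_k = (e_k + e_{d−k+1})/√2 if 2k < d+1, φ_k = e_k if 2k = d+1, and φ_k = (e_k − e_{d−k+1})/√2 if 2k > d+1. Then 2 ∑_{i=1}^d ∑_{j=1}^d p_{i,j} |⟨φ_i, h φ_j⟩|² = (1/2) ∑_{k=1}^d p_{k,d-k+1} (h_k − h_{d-k+1})². (Attainment part of Theorem 1: the optimal initial state achieves the maximal quantum Fisher information.) -/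
/-- The optimal orthonormal basis built from the eigenbasis `e` of the generator
(0-based: index `k` corresponds to the 1-based index `k+1`, and `k.rev` to `d-k+1`):
`φ_k = (e_k + e_{d-k+1})/√2` if `2k < d+1`, `φ_k = e_k` if `2k = d+1`,
`φ_k = (e_k - e_{d-k+1})/√2` if `2k > d+1`. -/
noncomputable def optPhi {d : ℕ} (e : Fin d → EuclideanSpace ℂ (Fin d)) (k : Fin d) :
    EuclideanSpace ℂ (Fin d) :=
  if 2 * (k.val + 1) < d + 1 then ((Real.sqrt 2 : ℂ))⁻¹ • (e k + e k.rev)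
  else if 2 * (k.val + 1) = d + 1 then e k
  else ((Real.sqrt 2 : ℂ))⁻¹ • (e k - e k.rev)

/-- Attainment part of Theorem 1: for the optimal basis `φ`, the quantum Fisher
information `2 ∑ᵢⱼ p_{i,j} |⟨φᵢ, h φⱼ⟩|²` equals
`(1/2) ∑ₖ p_{k,d-k+1} (h_k - h_{d-k+1})²`. -/
theorem maxQFI_attained {d : ℕ} (hd : 1 ≤ d)
    (h : Matrix (Fin d) (Fin d) ℂ) (hh : h.IsHermitian)
    (a : Fin d → ℝ) (ha : Antitone a)
    (e : Fin d → EuclideanSpace ℂ (Fin d)) (he : Orthonormal ℂ e)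
    (heig : ∀ k, Matrix.toEuclideanLin h (e k) = (a k : ℂ) • e k)
    (p : Fin d → ℝ) (hp : Antitone p) (hp0 : ∀ i, 0 ≤ p i) :
    2 * ∑ i, ∑ j, pij p i j *
        ‖(inner ℂ (optPhi e i) (Matrix.toEuclideanLin h (optPhi e j)) : ℂ)‖ ^ 2
      = (1 / 2) * ∑ k, pij p k k.rev * (a k - a k.rev) ^ 2 := by
  have hin := orthonormal_iff_ite.mp he
  have hs : ((Real.sqrt 2 : ℂ))⁻¹ * ((Real.sqrt 2 : ℂ))⁻¹ = 1 / 2 := by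
    rw [← mul_inv, ← Complex.ofReal_mul, Real.mul_self_sqrt (by norm_num)]; norm_num
  have hpp : ∀ i, pij p i i = 0 := by intro i; simp [pij]
  rw [Finset.mul_sum, Finset.mul_sum]
  refine Finset.sum_congr rfl fun i _ => ?_
  rw [Finset.sum_eq_single i.rev]
  · by_cases hm : i.rev = i
    · rw [hm, hpp]; simp
    · have hm2 : ¬ i = i.rev := fun h => hm h.symm
      have hv : 2 * (i.val + 1) ≠ d + 1 := by
        intro h; apply hm; ext; simp [Fin.val_rev]; omega
      have hv2 : 2 * (i.rev.val + 1) ≠ d + 1 := by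
        simp only [Fin.val_rev]; omega
      have key : (inner ℂ (optPhi e i) (Matrix.toEuclideanLin h (optPhi e i.rev)) : ℂ)
          = (((a i - a i.rev) / 2 : ℝ) : ℂ) ∨
          (inner ℂ (optPhi e i) (Matrix.toEuclideanLin h (optPhi e i.rev)) : ℂ)
          = ((-((a i - a i.rev) / 2) : ℝ) : ℂ) := by
        by_cases hl : 2 * (i.val + 1) < d + 1
        · right
          have hl2 : ¬ 2 * (i.rev.val + 1) < d + 1 := by
            simp only [Fin.val_rev]; omega
          simp only [optPhi, hl, hl2, hv, hv2, if_true, if_false, Fin.rev_rev, map_smul, map_sub,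
            map_add, heig, inner_smul_left, inner_smul_right, inner_add_left, inner_sub_left,
            inner_add_right, inner_sub_right, hin, hm, hm2, map_inv₀, Complex.conj_ofReal]
          push_cast
          linear_combination (-(a i : ℂ) + a i.rev) * hs
        · left
          have hl2 : 2 * (i.rev.val + 1) < d + 1 := by
            simp only [Fin.val_rev]; omega
          simp only [optPhi, hl, hl2, hv, hv2, if_true, if_false, Fin.rev_rev, map_smul, map_sub,
            map_add, heig, inner_smul_left, inner_smul_right, inner_add_left, inner_sub_left,
            inner_add_right, inner_sub_right, hin, hm, hm2, map_inv₀, Complex.conj_ofReal]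
          push_cast
          linear_combination ((a i : ℂ) - a i.rev) * hs
      have key2 : ‖(inner ℂ (optPhi e i) (Matrix.toEuclideanLin h (optPhi e i.rev)) : ℂ)‖ ^ 2
          = ((a i - a i.rev) / 2) ^ 2 := by
        rcases key with k | k <;> rw [k, Complex.norm_real, Real.norm_eq_abs, sq_abs]
        ring
      rw [key2]; ring
  · intro j _ hj
    by_cases hij : j = i
    · rw [hij, hpp]; simp
    · have h1 : ¬ i = j := fun h => hij h.symm
      have h2 : ¬ i = j.rev := fun h => hj (by rw [h, Fin.rev_rev])
      have h3 : ¬ i.rev = j := fun h => hj h.symm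
      have h4 : ¬ i.rev = j.rev := fun h => h1 (Fin.rev_injective h)
      have : (inner ℂ (optPhi e i) (Matrix.toEuclideanLin h (optPhi e j)) : ℂ) = 0 := by
        unfold optPhi
        split_ifs <;>
        simp [heig, inner_smul_left, inner_smul_right, inner_add_left, inner_sub_left,
            inner_add_right, inner_sub_right, hin, h1, h2, h3, h4]
      rw [this]; simp
  · simp
end

section
/- Let d ≥ 2, let h be a d×d complex Hermitian matrix with an orthonormal eigenbasis e_1, …, e_d of ℂ^d, h e_k = h_k e_k, where h_1 ≥ … ≥ h_d. Define φ_k = (e_k + e_{d−k+1})/√2 if 2k < d+1, φ_k = e_k if 2k = d+1, and φ_k = (e_k − e_{d−k+1})/√2 if 2k > d+1. Then for every k ∈ {1, …, d−1}, ∑_{i=1}^{k} ∑_{j=k+1}^{d} |⟨φ_i, h φ_j⟩|² = (1/4) ∑_{i=1}^{min(k, d−k)} (h_i − h_{d−i+1})². (The basis (φ_k) saturates the Bloomfield–Watson inequality for every off-diagonal block of h.) -/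
theorem optPhi_entry {d : ℕ}
    (h : Matrix (Fin d) (Fin d) ℂ) (a : Fin d → ℝ)
    (e : Fin d → EuclideanSpace ℂ (Fin d)) (he : Orthonormal ℂ e)
    (heig : ∀ k, Matrix.toEuclideanLin h (e k) = (a k : ℂ) • e k)
    (i j : Fin d) (hij : i.val < j.val) :
    ‖(inner ℂ (optPhi e i) (Matrix.toEuclideanLin h (optPhi e j)) : ℂ)‖ ^ 2
      = if j = i.rev then (1 / 4) * (a i - a i.rev) ^ 2 else 0 := by
  have ho := orthonormal_iff_ite.mp he
  have hs : ((Real.sqrt 2 : ℂ))⁻¹ * ((Real.sqrt 2 : ℂ))⁻¹ = 1 / 2 := by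
    rw [← mul_inv, ← Complex.ofReal_mul, Real.mul_self_sqrt (by norm_num)]
    norm_num
  have hi := i.isLt
  have hj := j.isLt
  split_ifs with hr
  · have hv : j.val = d - (i.val + 1) := by rw [hr, Fin.val_rev]
    have hne : i ≠ i.rev := by
      rw [← hr]; exact fun hc => by rw [hc] at hij; exact lt_irrefl _ hij
    have h1 : optPhi e i = ((Real.sqrt 2 : ℂ))⁻¹ • (e i + e i.rev) := by
      unfold optPhi; rw [if_pos (by omega)]
    have h2 : optPhi e j = ((Real.sqrt 2 : ℂ))⁻¹ • (e i.rev - e i) := by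
      unfold optPhi; rw [if_neg (by omega), if_neg (by omega), hr, Fin.rev_rev]
    have key : (inner ℂ (optPhi e i) (Matrix.toEuclideanLin h (optPhi e j)) : ℂ)
        = (((a i.rev - a i) / 2 : ℝ) : ℂ) := by
      rw [h1, h2]
      simp only [map_smul, map_sub, heig, inner_smul_left, inner_smul_right, inner_add_left,
        inner_sub_right, ho, if_pos, if_neg hne, if_neg hne.symm, map_inv₀, Complex.conj_ofReal]
      push_cast
      linear_combination ((a i.rev : ℂ) - a i) * hs
    rw [key, Complex.norm_real, Real.norm_eq_abs, sq_abs]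
    ring
  · have n1 : i ≠ j := fun hc => by rw [hc] at hij; exact lt_irrefl _ hij
    have n2 : i ≠ j.rev := fun hc => hr (by rw [hc, Fin.rev_rev])
    have n3 : i.rev ≠ j := fun hc => hr hc.symm
    have n4 : i.rev ≠ j.rev := fun hc => n1 (Fin.rev_injective hc)
    have key : (inner ℂ (optPhi e i) (Matrix.toEuclideanLin h (optPhi e j)) : ℂ) = 0 := by
      unfold optPhi
      split_ifs <;>
      simp [heig, inner_smul_left, inner_smul_right, inner_add_left, inner_add_right,
        inner_sub_left, inner_sub_right, ho, n1, n2, n3, n4, -Matrix.toLpLin_apply]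
    rw [key]; simp

/-- The optimal basis `φ` saturates the Bloomfield–Watson inequality: for every
`k ∈ {1, …, d-1}`, the squared Hilbert–Schmidt norm of the off-diagonal block of `h`
in the basis `φ` (rows `1..k`, columns `k+1..d`, here 0-based rows `i < k` and columns
`j ≥ k`) equals `(1/4) ∑_{i=1}^{min(k,d-k)} (h_i - h_{d-i+1})²`. -/
theorem optPhi_saturates_BloomfieldWatson {d : ℕ} (hd : 2 ≤ d)
    (h : Matrix (Fin d) (Fin d) ℂ) (hh : h.IsHermitian)
    (a : Fin d → ℝ) (ha : Antitone a)
    (e : Fin d → EuclideanSpace ℂ (Fin d)) (he : Orthonormal ℂ e)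
    (heig : ∀ k, Matrix.toEuclideanLin h (e k) = (a k : ℂ) • e k)
    (k : ℕ) (hk1 : 1 ≤ k) (hk2 : k ≤ d - 1) :
    ∑ i ∈ Finset.univ.filter (fun i : Fin d => i.val < k),
      ∑ j ∈ Finset.univ.filter (fun j : Fin d => k ≤ j.val),
        ‖(inner ℂ (optPhi e i) (Matrix.toEuclideanLin h (optPhi e j)) : ℂ)‖ ^ 2
      = (1 / 4) * ∑ i ∈ Finset.univ.filter (fun i : Fin d => i.val < min k (d - k)),
          (a i - a i.rev) ^ 2 := by
  have key : ∀ i ∈ Finset.univ.filter (fun i : Fin d => i.val < k),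
      ∑ j ∈ Finset.univ.filter (fun j : Fin d => k ≤ j.val),
        ‖(inner ℂ (optPhi e i) (Matrix.toEuclideanLin h (optPhi e j)) : ℂ)‖ ^ 2
      = if i.val < d - k then (1 / 4) * (a i - a i.rev) ^ 2 else 0 := by
    intro i hi
    have hi' : i.val < k := by simpa using hi
    have hlt := i.isLt
    rw [Finset.sum_congr rfl (fun j hj => optPhi_entry h a e he heig i j
      (lt_of_lt_of_le hi' (by simpa using hj))), Finset.sum_ite_eq']
    refine if_congr ?_ rfl rfl
    simp only [Finset.mem_filter, Finset.mem_univ, true_and, Fin.val_rev]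
    omega
  rw [Finset.sum_congr rfl key, ← Finset.sum_filter, Finset.filter_filter, Finset.mul_sum]
  simp only [lt_min_iff]
end

section
/- Let d ≥ 4 and let p_1 ≥ … ≥ p_d ≥ 0 be real numbers. Then for all indices 1 ≤ i < j < k < l ≤ d, p_{i,l} + p_{j,k} ≥ p_{i,k} + p_{j,l}. -/
theorem pij_aux (a b c e : ℝ) (hab : b ≤ a) (hec : e ≤ c) (he : 0 ≤ e) (hb : 0 < b) (hc : 0 < c) :
    (a - c) ^ 2 / (a + c) + (b - e) ^ 2 / (b + e)
      ≤ (a - e) ^ 2 / (a + e) + (b - c) ^ 2 / (b + c) := by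
  have ha : 0 < a := by linarith
  have key : ∀ x : ℝ, 0 < x → (x - e) ^ 2 / (x + e) - (x - c) ^ 2 / (x + c)
      = (e - c) + 4 * (c - e) * ((x / (x + c)) * (x / (x + e))) := by
    intro x hx
    have h1 : x + c ≠ 0 := by positivity
    have h2 : x + e ≠ 0 := by positivity
    field_simp
    ring
  have mono : ∀ t : ℝ, 0 ≤ t → b / (b + t) ≤ a / (a + t) := by
    intro t ht
    rw [div_le_div_iff₀ (by positivity) (by positivity)]
    nlinarith
  have h := mul_le_mul (mono c hc.le) (mono e he) (by positivity) (by positivity)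
  have h' := mul_le_mul_of_nonneg_left h (by linarith : (0:ℝ) ≤ 4 * (c - e))
  have k1 := key a ha
  have k2 := key b hb
  linarith

/-- For `p_1 ≥ … ≥ p_d ≥ 0` and indices `i < j < k < l`,
`p_{i,l} + p_{j,k} ≥ p_{i,k} + p_{j,l}`. -/
theorem pij_main_inequality {d : ℕ} (hd : 4 ≤ d)
    (p : Fin d → ℝ) (hp : Antitone p) (hp0 : ∀ i, 0 ≤ p i)
    (i j k l : Fin d) (hij : i < j) (hjk : j < k) (hkl : k < l) :
    pij p i k + pij p j l ≤ pij p i l + pij p j k := by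
  have e : ∀ x y, pij p x y = (p x - p y) ^ 2 / (p x + p y) := by
    intro x y
    unfold pij
    split_ifs with h
    · simp [h.1, h.2]
    · rfl
  simp only [e]
  have h1 := hp hij.le
  have h2 := hp hjk.le
  have h3 := hp hkl.le
  have h4 := hp0 l
  rcases (hp0 k).eq_or_lt with hc | hc
  · have hl : p l = p k := by linarith
    rw [hl]
  · exact pij_aux _ _ _ _ h1 h3 h4 (by linarith) hc
end

section
/- Let d ≥ 3 and let p_1 ≥ … ≥ p_d ≥ 0 be real numbers. Then for all indices 1 ≤ i < j < l ≤ d, p_{i,l} ≥ p_{i,j} + p_{j,l}. (Lemma 1(i) of the Supplemental Material.) -/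
/-- Lemma 1(i): for `p_1 ≥ … ≥ p_d ≥ 0` and indices `i < j < l`,
`p_{i,l} ≥ p_{i,j} + p_{j,l}`. -/
theorem pij_triangle {d : ℕ} (hd : 3 ≤ d)
    (p : Fin d → ℝ) (hp : Antitone p) (hp0 : ∀ i, 0 ≤ p i)
    (i j l : Fin d) (hij : i < j) (hjl : j < l) :
    pij p i j + pij p j l ≤ pij p i l := by
  have h1 : p j ≤ p i := hp hij.le
  have h2 : p l ≤ p j := hp hjl.le
  have h3 := hp0 l
  unfold pij
  generalize p i = a at *
  generalize p j = b at *
  generalize p l = c at *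
  rcases (h3.trans h2).eq_or_lt with hb | hb
  · subst hb
    have hc : c = 0 := le_antisymm h2 h3
    subst hc
    simp
  · have ha : 0 < a := lt_of_lt_of_le hb h1
    rw [if_neg (fun h => ha.ne' h.1), if_neg (fun h => hb.ne' h.1),
      if_neg (fun h => ha.ne' h.1)]
    have e : (a - c) ^ 2 / (a + c) - ((a - b) ^ 2 / (a + b) + (b - c) ^ 2 / (b + c))
        = 2 * (a - b) * (b - c) * (a * b + b * c + 2 * (a * c))
          / ((a + b) * (b + c) * (a + c)) := by
      have x1 : a + b ≠ 0 := by positivity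
      have x2 : b + c ≠ 0 := by positivity
      have x3 : a + c ≠ 0 := by positivity
      field_simp
      ring
    have : 0 ≤ 2 * (a - b) * (b - c) * (a * b + b * c + 2 * (a * c))
          / ((a + b) * (b + c) * (a + c)) := by
      have y1 : 0 ≤ a - b := sub_nonneg.2 h1
      have y2 : 0 ≤ b - c := sub_nonneg.2 h2
      positivity
    linarith
end

section
/- Let d ≥ 4 and let p_1 ≥ … ≥ p_d ≥ 0 be real numbers. Then for all indices 1 < i+1 < k < l ≤ d, p_{i,l} − p_{i+1,l} ≥ p_{i,k} − p_{i+1,k}. (Lemma 1(ii) of the Supplemental Material.) -/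
theorem pij_aux_eq (a b x : ℝ) (hb : 0 < b) (hab : b ≤ a) (hx : 0 ≤ x) :
    (a - x) ^ 2 / (a + x) - (b - x) ^ 2 / (b + x)
      = (a - b) * (1 - 4 * ((x / (a + x)) * (x / (b + x)))) := by
  have h1 : a + x ≠ 0 := by linarith
  have h2 : b + x ≠ 0 := by linarith
  field_simp
  ring

theorem pij_aux_mono (a x y : ℝ) (ha : 0 < a) (hy : 0 ≤ y) (hyx : y ≤ x) :
    y / (a + y) ≤ x / (a + x) := by
  rw [div_le_div_iff₀ (by linarith) (by linarith)]
  nlinarith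

/-- Lemma 1(ii): for `p_1 ≥ … ≥ p_d ≥ 0` and indices with `j = i+1 < k < l`,
`p_{i,l} − p_{i+1,l} ≥ p_{i,k} − p_{i+1,k}`. -/
theorem pij_row_difference {d : ℕ} (hd : 4 ≤ d)
    (p : Fin d → ℝ) (hp : Antitone p) (hp0 : ∀ i, 0 ≤ p i)
    (i j k l : Fin d) (hij : j.val = i.val + 1) (hjk : j < k) (hkl : k < l) :
    pij p i k - pij p j k ≤ pij p i l - pij p j l := by
  have hA : p j ≤ p i := hp (by rw [Fin.le_def]; omega)
  have hB : p k ≤ p j := hp hjk.le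
  have hC : p l ≤ p k := hp hkl.le
  have hl := hp0 l
  have e : ∀ m n, pij p m n = (p m - p n) ^ 2 / (p m + p n) := by
    intro m n
    unfold pij
    split_ifs with h
    · simp [h.1, h.2]
    · rfl
  rcases (hp0 j).eq_or_lt with h0 | h0
  · have hk : p k = 0 := by linarith [hp0 k]
    have hl' : p l = 0 := by linarith
    rw [e, e, e, e, hk, hl']
  · rw [e, e, e, e, pij_aux_eq _ _ _ h0 hA (hp0 k), pij_aux_eq _ _ _ h0 hA hl]
    have m1 := pij_aux_mono (p i) _ _ (by linarith) hl hC
    have m2 := pij_aux_mono (p j) _ _ h0 hl hC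
    have m3 := mul_le_mul m1 m2 (div_nonneg hl (by linarith))
      (div_nonneg (hp0 k) (by linarith [hp0 k]))
    exact mul_le_mul_of_nonneg_left (by linarith) (by linarith)
end

section
/- Let d ≥ 4 and let p_1 ≥ … ≥ p_d ≥ 0 be real numbers. Then for all indices 1 ≤ i < j < l−1 < d, p_{i,l} − p_{i,l−1} ≥ p_{j,l} − p_{j,l−1}. (Lemma 1(iii) of the Supplemental Material.) -/
theorem pij_diff_aux {d : ℕ} (p : Fin d → ℝ) (i m l : Fin d) (h : 0 < p i) (hm : 0 ≤ p m)
    (hl : 0 ≤ p l) : pij p i l - pij p i m =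
      4 * (p m - p l) * ((p i / (p i + p l)) * (p i / (p i + p m))) - (p m - p l) := by
  have h1 : p i + p l ≠ 0 := by positivity
  have h2 : p i + p m ≠ 0 := by positivity
  simp only [pij, h.ne', false_and, if_false]
  field_simp
  ring

theorem div_aux {a b x : ℝ} (hb : 0 < b) (hab : b ≤ a) (hx : 0 ≤ x) :
    b / (b + x) ≤ a / (a + x) := by
  have ha : 0 < a := hb.trans_le hab
  rw [div_le_div_iff₀ (by positivity) (by positivity)]
  nlinarith

/-- Lemma 1(iii): for `p_1 ≥ … ≥ p_d ≥ 0` and indices `i < j < l-1` (with `m = l-1`),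
`p_{i,l} − p_{i,l-1} ≥ p_{j,l} − p_{j,l-1}`. -/
theorem pij_column_difference {d : ℕ} (hd : 4 ≤ d)
    (p : Fin d → ℝ) (hp : Antitone p) (hp0 : ∀ i, 0 ≤ p i)
    (i j m l : Fin d) (hij : i < j) (hjm : j < m) (hml : l.val = m.val + 1) :
    pij p j l - pij p j m ≤ pij p i l - pij p i m := by
  have hab : p j ≤ p i := hp hij.le
  have hbc : p m ≤ p j := hp hjm.le
  have hce : p l ≤ p m := hp (by rw [Fin.le_def]; omega)
  have hc := hp0 m
  have he := hp0 l
  rcases (hp0 j).eq_or_lt with hb | hb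
  · have h1 : p m = 0 := by linarith
    have h2 : p l = 0 := by linarith
    simp [pij, h1, h2]
  · have ha : 0 < p i := hb.trans_le hab
    rw [pij_diff_aux p j m l hb hc he, pij_diff_aux p i m l ha hc he]
    have h1 := div_aux hb hab hc
    have h2 := div_aux hb hab he
    have h3 : 0 ≤ 4 * (p m - p l) := by linarith
    have h4 : 0 ≤ p j / (p j + p m) := by positivity
    have h5 : 0 ≤ p i / (p i + p l) := by positivity
    have h6 := mul_le_mul h2 h1 h4 h5
    have h7 := mul_le_mul_of_nonneg_left h6 h3
    linarith
end

section
/- Let d ≥ 2 and let p_1 ≥ … ≥ p_d ≥ 0 be real numbers. Then there exist nonnegative real numbers q_{1,2}, q_{2,3}, …, q_{d−1,d} such that, defining q_{i,j} = ∑_{k=i}^{j−1} q_{k,k+1} for 1 ≤ i < j ≤ d, one has q_{i,j} = p_{i,j} whenever j = d − i + 1, and q_{i,j} ≥ p_{i,j} for all 1 ≤ i < j ≤ d. (Proposition 1 of the Supplemental Material.) -/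
noncomputable def ff (a b : ℝ) : ℝ := (a - b) ^ 2 / (a + b)

lemma pij_eq {d : ℕ} (p : Fin d → ℝ) (i j : Fin d) : pij p i j = ff (p i) (p j) := by
  unfold pij ff
  split_ifs with h
  · simp [h.1, h.2]
  · rfl

lemma ff_nonneg {a b : ℝ} (ha : 0 ≤ a) (hb : 0 ≤ b) : 0 ≤ ff a b := by
  unfold ff; positivity

lemma ff_self (a : ℝ) : ff a a = 0 := by simp [ff]

lemma ff_zero (a : ℝ) : ff a 0 = a := by
  unfold ff
  by_cases h : a = 0
  · simp [h]
  · simp only [sub_zero, zero_sub, add_zero, zero_add, neg_sq]; field_simp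

lemma zero_ff (a : ℝ) : ff 0 a = a := by
  unfold ff
  by_cases h : a = 0
  · simp [h]
  · simp only [sub_zero, zero_sub, add_zero, zero_add, neg_sq]; field_simp

lemma ff_diff {a a' b : ℝ} (ha : 0 ≤ a) (ha' : 0 ≤ a') (hb : 0 < b) :
    ff a b - ff a' b = (a - a') * (1 - 4 * ((b / (a + b)) * (b / (a' + b)))) := by
  unfold ff
  have h1 : a + b ≠ 0 := by positivity
  have h2 : a' + b ≠ 0 := by positivity
  field_simp
  ring

lemma ratio_mono {a b b' : ℝ} (ha : 0 ≤ a) (hb' : 0 < b') (h : b' ≤ b) :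
    b' / (a + b') ≤ b / (a + b) := by
  have hb : 0 < b := by linarith
  rw [div_le_div_iff₀ (by positivity) (by positivity)]
  nlinarith [mul_le_mul_of_nonneg_left h ha]

lemma ff_submod {a a' b b' : ℝ} (ha' : 0 ≤ a') (hb' : 0 ≤ b') (h : a' ≤ a) (k : b' ≤ b) :
    ff a b - ff a' b ≤ ff a b' - ff a' b' := by
  have ha : 0 ≤ a := ha'.trans h
  rcases hb'.eq_or_lt with rfl | hb'
  · rw [ff_zero, ff_zero]
    rcases k.eq_or_lt with rfl | hb
    · rw [ff_zero, ff_zero]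
    · rw [ff_diff ha ha' hb]
      have : 0 ≤ (b / (a + b)) * (b / (a' + b)) := by positivity
      nlinarith [mul_nonneg (sub_nonneg.2 h) this]
  · have hb : 0 < b := by linarith
    rw [ff_diff ha ha' hb, ff_diff ha ha' hb']
    have : (b' / (a + b')) * (b' / (a' + b')) ≤ (b / (a + b)) * (b / (a' + b)) :=
      mul_le_mul (ratio_mono ha hb' k) (ratio_mono ha' hb' k) (by positivity) (by positivity)
    nlinarith [mul_le_mul_of_nonneg_left this (sub_nonneg.2 h)]

lemma ff_super {a b c : ℝ} (hc : 0 ≤ c) (h : b ≤ a) (k : c ≤ b) :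
    ff a b + ff b c ≤ ff a c := by
  have := ff_submod (hc.trans k) hc h k
  rw [ff_self] at this
  linarith

noncomputable def LL (P : ℕ → ℝ) (N i : ℕ) : ℝ :=
  ∑ m ∈ Finset.range i, (ff (P m) (P (N - 1 - m)) - ff (P (m + 1)) (P (N - 1 - m)))

lemma LL_bounds (P : ℕ → ℝ) (hP : Antitone P) (h0 : ∀ n, 0 ≤ P n) (N i l : ℕ) (h : i ≤ l) :
    ff (P i) (P (N - l)) - ff (P l) (P (N - l)) ≤ LL P N l - LL P N i ∧
    (l ≤ N → LL P N l - LL P N i ≤ ff (P i) (P (N - i)) - ff (P l) (P (N - i))) := by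
  induction l, h using Nat.le_induction with
  | base => simp
  | succ l hl ih =>
    have e : LL P N (l + 1) = LL P N l
        + (ff (P l) (P (N - 1 - l)) - ff (P (l + 1)) (P (N - 1 - l))) := by
      unfold LL; rw [Finset.sum_range_succ]
    have e2 : N - (l + 1) = N - 1 - l := by omega
    rw [e, e2]
    constructor
    · have := ff_submod (h0 l) (h0 (N - l)) (hP hl) (hP (show N - 1 - l ≤ N - l by omega))
      linarith [ih.1]
    · intro hN
      have := ff_submod (h0 (l + 1)) (h0 (N - i)) (hP (Nat.le_succ l))
        (hP (show N - 1 - l ≤ N - i by omega))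
      linarith [ih.2 (by omega)]

noncomputable def XX (P : ℕ → ℝ) (N i : ℕ) : ℝ :=
  if 2 * i ≤ N then LL P N i else LL P N (N - i) + ff (P (N - i)) (P i)

lemma XX_ge (P : ℕ → ℝ) (hP : Antitone P) (h0 : ∀ n, 0 ≤ P n) (N i j : ℕ) (h : i < j)
    (hj : j ≤ N) : ff (P i) (P j) ≤ XX P N j - XX P N i := by
  unfold XX
  split_ifs with h1 h2 h2
  · have A := (LL_bounds P hP h0 N i j h.le).1
    have B := ff_super (h0 (N - j)) (hP h.le) (hP (show j ≤ N - j by omega))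
    linarith
  · omega
  · rcases le_total i (N - j) with c | c
    · have A := (LL_bounds P hP h0 N i (N - j) c).1
      rw [show N - (N - j) = j by omega] at A
      linarith
    · have A := (LL_bounds P hP h0 N (N - j) i c).2 (by omega)
      rw [show N - (N - j) = j by omega] at A
      linarith
  · have A := (LL_bounds P hP h0 N (N - j) (N - i) (by omega)).2 (by omega)
    rw [show N - (N - j) = j by omega] at A
    have B := ff_super (h0 j) (hP (show N - i ≤ i by omega)) (hP h.le)
    linarith

/-- Proposition 1 of the Supplemental Material: there exist nonnegative consecutive
coefficients `q k` (representing `q_{k,k+1}`, 0-based) such that the induced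
coefficients `q_{i,j} = ∑_{k=i}^{j-1} q_{k,k+1}` satisfy `q_{i,j} = p_{i,j}` for the
central coefficients (`j = d - i + 1`, 0-based `j = i.rev`) and `q_{i,j} ≥ p_{i,j}`
for all `i < j`. -/
theorem exists_q_coefficients {d : ℕ} (hd : 2 ≤ d)
    (p : Fin d → ℝ) (hp : Antitone p) (hp0 : ∀ i, 0 ≤ p i) :
    ∃ q : ℕ → ℝ, (∀ k, 0 ≤ q k) ∧
      (∀ i j : Fin d, i < j →
        ((j = i.rev → (∑ k ∈ Finset.Ico i.val j.val, q k) = pij p i j) ∧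
          pij p i j ≤ ∑ k ∈ Finset.Ico i.val j.val, q k)) := by
  obtain ⟨N, rfl⟩ : ∃ N, d = N + 1 := ⟨d - 1, by omega⟩
  let P : ℕ → ℝ := fun n => p ⟨min n N, by omega⟩
  have hP : Antitone P := fun a b hab => hp (by
    rw [Fin.mk_le_mk]; exact min_le_min_right N hab)
  have h0 : ∀ n, 0 ≤ P n := fun n => hp0 _
  have hPp : ∀ i : Fin (N + 1), P i.val = p i := fun i => by
    have := i.isLt
    simp only [P]
    congr 1
    ext
    simp only
    omega
  refine ⟨fun k => if k < N then XX P N (k + 1) - XX P N k else 0, ?_, ?_⟩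
  · intro k
    simp only
    split_ifs with hk
    · exact (ff_nonneg (h0 _) (h0 _)).trans (XX_ge P hP h0 N k (k + 1) (by omega) (by omega))
    · exact le_rfl
  · intro i j hij
    have hij' : i.val < j.val := hij
    have hjN := j.isLt
    have hs : (∑ k ∈ Finset.Ico i.val j.val, (if k < N then XX P N (k + 1) - XX P N k else 0))
        = XX P N j.val - XX P N i.val := by
      rw [← Finset.sum_Ico_sub (XX P N) hij'.le]
      apply Finset.sum_congr rfl
      intro k hk
      rw [Finset.mem_Ico] at hk
      rw [if_pos (by omega)]
    rw [hs, pij_eq, ← hPp, ← hPp]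
    refine ⟨fun hr => ?_, XX_ge P hP h0 N _ _ hij' (by omega)⟩
    have hr' : j.val = N - i.val := by rw [hr, Fin.val_rev]; omega
    unfold XX
    rw [if_neg (by omega), if_pos (by omega), show N - j.val = i.val by omega]
    ring
end

section
/- Let A and B be d×d complex Hermitian matrices and let C = A + B. Denote by a_1 ≥ … ≥ a_d, b_1 ≥ … ≥ b_d, and c_1 ≥ … ≥ c_d the eigenvalues of A, B, and C in decreasing order. Then for every r with 1 ≤ r ≤ ⌈d/2⌉, ∑_{i=1}^{r} (c_i − c_{d−i+1}) ≤ ∑_{i=1}^{r} (a_i − a_{d−i+1} + b_i − b_{d−i+1}); that is, the vector d(C) is weakly majorized by d(A) + d(B). (Lemma 3 of the Supplemental Material.) -/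
open scoped InnerProductSpace in
theorem kyfan_aux {d : ℕ} (A : Matrix (Fin d) (Fin d) ℂ) (a : Fin d → ℝ)
    (u w : Fin d → EuclideanSpace ℂ (Fin d))
    (hu : Orthonormal ℂ u) (hw : Orthonormal ℂ w)
    (hAu : ∀ k, Matrix.toEuclideanLin A (u k) = (a k : ℂ) • u k)
    (S : Finset (Fin d)) (t : ℝ) (h1 : ∀ k ∈ S, t ≤ a k) (h2 : ∀ k, k ∉ S → a k ≤ t) :
    ∑ i ∈ S, (⟪w i, Matrix.toEuclideanLin A (w i)⟫_ℂ).re ≤ ∑ i ∈ S, a i := by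
  classical
  have hcard : Fintype.card (Fin d) = Module.finrank ℂ (EuclideanSpace ℂ (Fin d)) := by simp
  obtain ⟨U, hU⟩ : ∃ U : OrthonormalBasis (Fin d) ℂ (EuclideanSpace ℂ (Fin d)), ⇑U = u := by
    have hsp : ⊤ ≤ Submodule.span ℂ (Set.range u) := by
      rw [hu.linearIndependent.span_eq_top_of_card_eq_finrank' hcard]
    exact ⟨OrthonormalBasis.mk hu hsp, OrthonormalBasis.coe_mk hu hsp⟩
  have key : ∀ x, (⟪x, Matrix.toEuclideanLin A x⟫_ℂ).re = ∑ k, a k * ‖⟪u k, x⟫_ℂ‖ ^ 2 := by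
    intro x
    have hx : Matrix.toEuclideanLin A x = ∑ k, ⟪u k, x⟫_ℂ • ((a k : ℂ) • u k) := by
      conv_lhs => rw [← U.sum_repr' x, hU]
      simp [map_sum, hAu]
    rw [hx, inner_sum, Complex.re_sum]
    refine Finset.sum_congr rfl fun k _ => ?_
    rw [inner_smul_right, inner_smul_right, ← inner_conj_symm x (u k), mul_left_comm,
      Complex.mul_conj, Complex.normSq_eq_norm_sq, ← Complex.ofReal_mul, Complex.ofReal_re]
  have hcol : ∀ i, ∑ k, ‖⟪u k, w i⟫_ℂ‖ ^ 2 = 1 := by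
    intro i
    have := U.sum_sq_norm_inner_right (w i)
    rw [hU, hw.1 i] at this
    simpa using this
  have hrow : ∀ k, ∑ i ∈ S, ‖⟪u k, w i⟫_ℂ‖ ^ 2 ≤ 1 := by
    intro k
    have := hw.sum_inner_products_le (s := S) (u k)
    rw [hu.1 k] at this
    simpa [norm_inner_symm] using this
  simp_rw [key]
  rw [Finset.sum_comm]
  simp_rw [← Finset.mul_sum]
  set p : Fin d → ℝ := fun k => ∑ i ∈ S, ‖⟪u k, w i⟫_ℂ‖ ^ 2 with hp
  have hp0 : ∀ k, 0 ≤ p k := fun k => Finset.sum_nonneg fun _ _ => by positivity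
  have hps : ∑ k, p k = S.card := by
    rw [hp, Finset.sum_comm]; simp [hcol]
  have hs : ∑ k, (a k - t) * (p k - if k ∈ S then 1 else 0) ≤ 0 := by
    refine Finset.sum_nonpos fun k _ => ?_
    split_ifs with hk
    · exact mul_nonpos_of_nonneg_of_nonpos (by linarith [h1 k hk]) (by linarith [hrow k])
    · exact mul_nonpos_of_nonpos_of_nonneg (by linarith [h2 k hk]) (by linarith [hp0 k])
  have he : ∑ k, (a k - t) * (p k - if k ∈ S then 1 else 0)
      = ∑ k, a k * p k - ∑ i ∈ S, a i - t * (∑ k, p k) + t * S.card := by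
    simp only [sub_mul, mul_sub, Finset.sum_sub_distrib, ← Finset.mul_sum]
    simp
    ring
  rw [hps] at he
  change ∑ k, a k * p k ≤ _
  linarith

/-- Lemma 3 of the Supplemental Material: if `C = A + B` with `A, B, C` Hermitian with
decreasingly ordered eigenvalues `a, b, c` (each witnessed by an orthonormal
eigenbasis), then `d(C)` is weakly majorized by `d(A) + d(B)`: for every
`1 ≤ r ≤ ⌈d/2⌉`, `∑_{i=1}^r (c_i − c_{d−i+1}) ≤ ∑_{i=1}^r (a_i − a_{d−i+1} + b_i − b_{d−i+1})`. -/
theorem weak_majorization_of_sum {d : ℕ} (hd : 1 ≤ d)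
    (A B : Matrix (Fin d) (Fin d) ℂ) (hA : A.IsHermitian) (hB : B.IsHermitian)
    (a b c : Fin d → ℝ) (ha : Antitone a) (hb : Antitone b) (hc : Antitone c)
    (u v w : Fin d → EuclideanSpace ℂ (Fin d))
    (hu : Orthonormal ℂ u) (hv : Orthonormal ℂ v) (hw : Orthonormal ℂ w)
    (hAu : ∀ k, Matrix.toEuclideanLin A (u k) = (a k : ℂ) • u k)
    (hBv : ∀ k, Matrix.toEuclideanLin B (v k) = (b k : ℂ) • v k)
    (hCw : ∀ k, Matrix.toEuclideanLin (A + B) (w k) = (c k : ℂ) • w k)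
    (r : ℕ) (hr1 : 1 ≤ r) (hr2 : r ≤ (d + 1) / 2) :
    ∑ i ∈ Finset.univ.filter (fun i : Fin d => i.val < r), (c i - c i.rev)
      ≤ ∑ i ∈ Finset.univ.filter (fun i : Fin d => i.val < r),
          (a i - a i.rev + (b i - b i.rev)) := by
  classical
  have hrd : r - 1 < d := by omega
  set F := Finset.univ.filter (fun i : Fin d => i.val < r) with hF
  set G := F.map Fin.revPerm.toEmbedding with hG
  have hrev : ∀ f : Fin d → ℝ, ∑ i ∈ F, f i.rev = ∑ i ∈ G, f i := by
    intro f; simp [hG]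
  have hGm : ∀ k, k ∈ G ↔ k.rev.val < r := by
    intro k
    simp only [hG, hF, Finset.mem_map_equiv, Finset.mem_filter, Finset.mem_univ, true_and]
    rfl
  have up : ∀ (M : Matrix (Fin d) (Fin d) ℂ) (x : Fin d → ℝ) (y : Fin d → EuclideanSpace ℂ (Fin d)),
      Antitone x → Orthonormal ℂ y →
      (∀ k, Matrix.toEuclideanLin M (y k) = (x k : ℂ) • y k) →
      ∑ i ∈ F, (inner ℂ (w i) (Matrix.toEuclideanLin M (w i))).re ≤ ∑ i ∈ F, x i := by
    intro M x y hx hy hM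
    refine kyfan_aux M x y w hy hw hM F (x ⟨r - 1, hrd⟩) ?_ ?_
    · intro k hk
      simp [hF] at hk
      exact hx (Fin.le_def.2 (by simp; omega))
    · intro k hk
      simp [hF] at hk
      exact hx (Fin.le_def.2 (by simp; omega))
  have dn : ∀ (M : Matrix (Fin d) (Fin d) ℂ) (x : Fin d → ℝ) (y : Fin d → EuclideanSpace ℂ (Fin d)),
      Antitone x → Orthonormal ℂ y →
      (∀ k, Matrix.toEuclideanLin M (y k) = (x k : ℂ) • y k) →
      ∑ i ∈ G, x i ≤ ∑ i ∈ G, (inner ℂ (w i) (Matrix.toEuclideanLin M (w i))).re := by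
    intro M x y hx hy hM
    have := kyfan_aux (-M) (fun k => - x k) y w hy hw (by intro k; simp [hM]) G
      (- x (Fin.rev ⟨r - 1, hrd⟩)) ?_ ?_
    · simp at this
      exact this
    · intro k hk
      rw [hGm, Fin.val_rev] at hk
      exact neg_le_neg (hx (Fin.le_def.2 (by simp [Fin.val_rev]; omega)))
    · intro k hk
      rw [hGm, Fin.val_rev] at hk
      exact neg_le_neg (hx (Fin.le_def.2 (by simp [Fin.val_rev]; omega)))
  have hcw : ∀ i, c i = (inner ℂ (w i) (Matrix.toEuclideanLin A (w i))).re
      + (inner ℂ (w i) (Matrix.toEuclideanLin B (w i))).re := by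
    intro i
    rw [← Complex.add_re, ← inner_add_right, ← LinearMap.add_apply, ← map_add, hCw,
      inner_smul_right, inner_self_eq_norm_sq_to_K, hw.1 i]
    simp
  have e1 := up A a u ha hu hAu
  have e2 := up B b v hb hv hBv
  have e3 := dn A a u ha hu hAu
  have e4 := dn B b v hb hv hBv
  simp only [Finset.sum_add_distrib, Finset.sum_sub_distrib, hrev]
  simp only [hcw, Finset.sum_add_distrib]
  linarith
end

section
/- Let d ≥ 1, let p_1 ≥ … ≥ p_d ≥ 0 be real numbers, and define φ_p : ℝ_+^d → ℝ by φ_p(x) = ∑_{i=1}^d p_i x_{[i]}², where x_{[1]} ≥ … ≥ x_{[d]} is the decreasing rearrangement of x. If x, y ∈ ℝ_+^d (vectors with nonnegative entries) satisfy the weak majorization x ≺_w y, i.e., ∑_{i=1}^k x_{[i]} ≤ ∑_{i=1}^k y_{[i]} for all k = 1, …, d, then φ_p(x) ≤ φ_p(y). -/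
/-- The decreasing rearrangement of a vector `x : Fin d → ℝ`:
`dsort x 0 ≥ dsort x 1 ≥ …` is `x` sorted in decreasing order. -/
noncomputable def dsort {d : ℕ} (x : Fin d → ℝ) (i : Fin d) : ℝ :=
  x (Tuple.sort x i.rev)

theorem abel_aux {d : ℕ} (w a : Fin d → ℝ) (hw : Antitone w)
    (ha : ∀ k : ℕ, k ≤ d → 0 ≤ ∑ i ∈ Finset.univ.filter (fun i : Fin d => i.val < k), a i)
    (n : ℕ) (hn : n ≤ d) : ∀ c : ℝ, (∀ i : Fin d, i.val < n → c ≤ w i) →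
      c * ∑ i ∈ Finset.univ.filter (fun i : Fin d => i.val < n), a i
      ≤ ∑ i ∈ Finset.univ.filter (fun i : Fin d => i.val < n), w i * a i := by
  induction n with
  | zero => intro c _; simp
  | succ n ih =>
    intro c hc
    have hnd : n < d := hn
    have hS : Finset.univ.filter (fun i : Fin d => i.val < n + 1)
        = insert (⟨n, hnd⟩ : Fin d) (Finset.univ.filter (fun i : Fin d => i.val < n)) := by
      ext i
      simp only [Finset.mem_filter, Finset.mem_univ, true_and, Finset.mem_insert, Fin.ext_iff]
      omega
    have h1 := ih hnd.le (w ⟨n, hnd⟩) (fun i hi => hw (Fin.le_def.2 hi.le))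
    have h2 := ha (n + 1) hn
    have h3 := hc ⟨n, hnd⟩ (Nat.lt_succ_self n)
    have h4 := mul_le_mul_of_nonneg_right h3 h2
    have hnot : (⟨n, hnd⟩ : Fin d) ∉ Finset.univ.filter (fun i : Fin d => i.val < n) := by simp
    refine h4.trans ?_
    rw [hS, Finset.sum_insert hnot, Finset.sum_insert hnot, mul_add]
    linarith

theorem dsort_antitone {d : ℕ} (x : Fin d → ℝ) : Antitone (dsort x) := by
  intro i j hij
  exact Tuple.monotone_sort x (Fin.rev_le_rev.2 hij)

/-- Schur-convexity consequence (Lemma 5): for decreasing nonnegative weights `p`,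
the function `φ_p(x) = ∑ᵢ pᵢ x_{[i]}²` is monotone under weak majorization of
nonnegative vectors: `x ≺_w y` implies `φ_p(x) ≤ φ_p(y)`. -/
theorem phi_p_mono_weak_majorization {d : ℕ} (hd : 1 ≤ d)
    (p : Fin d → ℝ) (hp : Antitone p) (hp0 : ∀ i, 0 ≤ p i)
    (x y : Fin d → ℝ) (hx : ∀ i, 0 ≤ x i) (hy : ∀ i, 0 ≤ y i)
    (hmaj : ∀ k : ℕ, k ≤ d →
      ∑ i ∈ Finset.univ.filter (fun i : Fin d => i.val < k), dsort x i
        ≤ ∑ i ∈ Finset.univ.filter (fun i : Fin d => i.val < k), dsort y i) :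
    ∑ i, p i * (dsort x i) ^ 2 ≤ ∑ i, p i * (dsort y i) ^ 2 := by
  have hx' : ∀ i, 0 ≤ dsort x i := fun i => hx _
  have hw : Antitone (fun i => p i * dsort x i) := fun i j hij =>
    mul_le_mul (hp hij) (dsort_antitone x hij) (hx' j) (hp0 i)
  have key := abel_aux (fun i => p i * dsort x i) (fun i => dsort y i - dsort x i) hw
    (fun k hk => by rw [Finset.sum_sub_distrib]; linarith [hmaj k hk]) d le_rfl 0
    (fun i _ => mul_nonneg (hp0 i) (hx' i))
  simp only [Fin.is_lt, Finset.filter_true, zero_mul] at key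
  have h2 : ∑ i, (p i * (dsort x i) ^ 2 + 2 * (p i * dsort x i * (dsort y i - dsort x i)))
      ≤ ∑ i, p i * (dsort y i) ^ 2 := by
    refine Finset.sum_le_sum fun i _ => ?_
    nlinarith [mul_nonneg (hp0 i) (sq_nonneg (dsort y i - dsort x i))]
  rw [Finset.sum_add_distrib, ← Finset.mul_sum] at h2
  linarith
end

section
/- Let d ≥ 2 and let p_1 ≥ … ≥ p_d ≥ 0 be real numbers. Then the sequence i ↦ p_{i,d−i+1} is weakly decreasing for 1 ≤ i ≤ ⌈d/2⌉; that is, p_{1,d} ≥ p_{2,d−1} ≥ … ≥ p_{⌈d/2⌉, d−⌈d/2⌉+1}, and all these values are nonnegative. -/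
theorem pij_eq_div {d : ℕ} (p : Fin d → ℝ) (i j : Fin d) :
    pij p i j = (p i - p j) ^ 2 / (p i + p j) := by
  unfold pij
  split_ifs with h
  · simp [h.1, h.2]
  · rfl

theorem central_aux (a b c e : ℝ) (hab : b ≤ a) (hbc : c ≤ b) (hce : e ≤ c) (he : 0 ≤ e) :
    (b - c) ^ 2 / (b + c) ≤ (a - e) ^ 2 / (a + e) := by
  rcases (show 0 ≤ b + c by linarith).eq_or_lt with h | h
  · rw [← h, div_zero]
    exact div_nonneg (sq_nonneg _) (by linarith)
  · have h2 : 0 < a + e := by linarith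
    rw [div_le_div_iff₀ h h2]
    obtain ⟨z, rfl⟩ : ∃ z, c = e + z := ⟨c - e, by ring⟩
    obtain ⟨x, rfl⟩ : ∃ x, b = e + z + x := ⟨b - (e + z), by ring⟩
    obtain ⟨y, rfl⟩ : ∃ y, a = e + z + x + y := ⟨a - (e + z + x), by ring⟩
    have hx : 0 ≤ x := by linarith
    have hy : 0 ≤ y := by linarith
    have hz : 0 ≤ z := by linarith
    have key : 0 ≤ 2 * e * ((y + z) * (2 * x + y + z))
        + (x + y + z) * (x * y + 3 * (x * z) + 2 * (y * z) + 2 * (z * z)) := by positivity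
    linarith [key]

/-- For `p_1 ≥ … ≥ p_d ≥ 0`, the central coefficients `i ↦ p_{i,d−i+1}`
(0-based `pij p i i.rev`) are weakly decreasing and nonnegative for
`1 ≤ i ≤ ⌈d/2⌉` (0-based `i.val < (d+1)/2`). -/
theorem central_coefficients_antitone_nonneg {d : ℕ} (hd : 2 ≤ d)
    (p : Fin d → ℝ) (hp : Antitone p) (hp0 : ∀ i, 0 ≤ p i) :
    (∀ i j : Fin d, i ≤ j → j.val < (d + 1) / 2 → pij p j j.rev ≤ pij p i i.rev) ∧
    (∀ i : Fin d, i.val < (d + 1) / 2 → 0 ≤ pij p i i.rev) := by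
  constructor
  · intro i j hij hj
    rw [pij_eq_div, pij_eq_div]
    apply central_aux _ _ _ _ (hp hij) (hp _) (hp _) (hp0 _)
    · rw [Fin.le_def, Fin.val_rev]
      omega
    · exact Fin.rev_le_rev.mpr hij
  · intro i _
    rw [pij_eq_div]
    exact div_nonneg (sq_nonneg _) (add_nonneg (hp0 _) (hp0 _))
end

section
/- Let N ≥ 1 and n ≥ 1 be integers and let β ≥ 0 be real. Then ∑ over all N-tuples (m_1, …, m_N) with m_i ∈ {0, …, n} of σ²/cosh(βσ), where σ = ∑_i (m_i − n/2), is at most (∑ over the same tuples of e^{βσ}) · N n(n+2)/12. (Equivalently, (4/Z_β^N) ∑_k q(k) k²/cosh(βk) ≤ (4/3) N j(j+1) with n = 2j: the negative term in the quantum Fisher information K_B is at most of order N, so the N²-scaling of K_B comes entirely from the positive term.) -/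
/-- The centered total spin of a configuration `m` of `N` spins, each taking values in
`{0, …, n}` (with `n = 2j`): `σ(m) = ∑ᵢ (mᵢ − n/2)`. -/
noncomputable def centeredSum {N n : ℕ} (m : Fin N → Fin (n + 1)) : ℝ :=
  ∑ i, (((m i : ℕ) : ℝ) - n / 2)

theorem aux_range1 (c : ℝ) (M : ℕ) :
    ∑ k ∈ Finset.range M, ((k : ℝ) - c) = M * (M - 1) / 2 - M * c := by
  induction M with
  | zero => simp
  | succ k ih => rw [Finset.sum_range_succ, ih]; push_cast; ring

theorem aux_range2 (c : ℝ) (M : ℕ) :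
    ∑ k ∈ Finset.range M, ((k : ℝ) - c) ^ 2
      = M * (M - 1) * (2 * M - 1) / 6 - c * (M * (M - 1)) + M * c ^ 2 := by
  induction M with
  | zero => simp
  | succ k ih => rw [Finset.sum_range_succ, ih]; push_cast; ring

theorem aux_one1 (n : ℕ) : ∑ k : Fin (n + 1), (((k : ℕ) : ℝ) - n / 2) = 0 := by
  rw [Fin.sum_univ_eq_sum_range (fun k : ℕ => ((k : ℝ) - n / 2)), aux_range1]
  push_cast; ring

theorem aux_one2 (n : ℕ) : ∑ k : Fin (n + 1), (((k : ℕ) : ℝ) - n / 2) ^ 2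
    = ((n : ℝ) + 1) * (n * (n + 2) / 12) := by
  rw [Fin.sum_univ_eq_sum_range (fun k : ℕ => ((k : ℝ) - n / 2) ^ 2), aux_range2]
  push_cast; ring

theorem aux_split (N n : ℕ) (f : ℝ → ℝ) :
    ∑ m : Fin (N + 1) → Fin (n + 1), f (centeredSum m)
      = ∑ k : Fin (n + 1), ∑ m : Fin N → Fin (n + 1),
          f ((((k : ℕ) : ℝ) - n / 2) + centeredSum m) := by
  rw [← (Fin.consEquiv (fun _ : Fin (N + 1) => Fin (n + 1))).sum_comp, Fintype.sum_prod_type]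
  refine Finset.sum_congr rfl fun k _ => Finset.sum_congr rfl fun m _ => ?_
  congr 1
  unfold centeredSum
  rw [Fin.sum_univ_succ]
  simp only [Fin.consEquiv_apply, Fin.cons_zero, Fin.cons_succ]

theorem aux_m1 (N n : ℕ) : ∑ m : Fin N → Fin (n + 1), centeredSum m = 0 := by
  induction N with
  | zero => simp [centeredSum]
  | succ N ih =>
    rw [aux_split N n (fun x => x)]
    simp only [Finset.sum_add_distrib, ih, Finset.sum_const, add_zero, ← Finset.smul_sum,
      aux_one1, smul_zero]

theorem aux_m2 (N n : ℕ) : ∑ m : Fin N → Fin (n + 1), (centeredSum m) ^ 2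
    = ((n : ℝ) + 1) ^ N * N * (n * (n + 2) / 12) := by
  induction N with
  | zero => simp [centeredSum]
  | succ N ih =>
    rw [aux_split N n (fun x => x ^ 2)]
    simp only [add_sq, Finset.sum_add_distrib, ih, Finset.sum_const, ← Finset.mul_sum, aux_m1,
      mul_zero, add_zero, ← Finset.smul_sum, aux_one2]
    simp
    ring

/-- The negative term of the quantum Fisher information `K_B` is at most of order `N`:
`∑_m σ(m)²/cosh(βσ(m)) ≤ (∑_m e^{βσ(m)}) · N n(n+2)/12`, the latter sum being `Z_β^N`. -/
theorem negative_term_bound (N n : ℕ) (hN : 1 ≤ N) (hn : 1 ≤ n) (β : ℝ) (hβ : 0 ≤ β) :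
    ∑ m : Fin N → Fin (n + 1), (centeredSum m) ^ 2 / Real.cosh (β * centeredSum m)
      ≤ (∑ m : Fin N → Fin (n + 1), Real.exp (β * centeredSum m))
          * N * n * ((n : ℝ) + 2) / 12 := by
  have h1 : ∑ m : Fin N → Fin (n + 1), (centeredSum m) ^ 2 / Real.cosh (β * centeredSum m)
      ≤ ((n : ℝ) + 1) ^ N * N * (n * (n + 2) / 12) := by
    rw [← aux_m2]
    exact Finset.sum_le_sum fun m _ => div_le_self (sq_nonneg _) (Real.one_le_cosh _)
  have h2 : ((n : ℝ) + 1) ^ N ≤ ∑ m : Fin N → Fin (n + 1), Real.exp (β * centeredSum m) := by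
    calc ((n : ℝ) + 1) ^ N = ∑ m : Fin N → Fin (n + 1), (β * centeredSum m + 1) := by
          rw [Finset.sum_add_distrib, ← Finset.mul_sum, aux_m1]; simp
      _ ≤ _ := Finset.sum_le_sum fun m _ => Real.add_one_le_exp _
  have h3 : (0 : ℝ) ≤ N * (n * (n + 2) / 12) := by positivity
  have h4 := mul_le_mul_of_nonneg_right h2 h3
  linarith
end
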